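/- arXiv:math/0403510 — 2 statements merged into one kernel-verified Lean document; each statement's English description precedes it below -/
import Mathlib

section
/- The real Gamma function satisfies Γ(11/15) = 2π · 3^(3/10) · Γ(1/5) · Γ(2/5)⁻¹ · Γ(1/15)⁻¹. -/
open Real

/-!
The identity is Gauss's multiplication formula
`∏_{k < n} Γ(s + k/n) = (2π)^((n-1)/2) n^(1/2 - ns) Γ(ns)` at `n = 3`, `s = 1/15`. Up to a constant
the formula follows from the Bohr–Mollerup theorem, because `s ↦ n^s ∏_{k < n} Γ((s + k)/n)` is
logarithmically convex and satisfies the functional equation of `Γ`. Euler's reflection formula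
expresses the square of the constant through `∏_{0 < k < n} sin(πk/n)`, and this product is read off
from `∏_{0 < k < n} (1 - ζ^k) = n` for a primitive `n`-th root of unity `ζ`.
-/

open Finset

theorem norm_one_sub_exp_two_pi_mul_I (x : ℝ) :
    ‖1 - Complex.exp (2 * π * Complex.I * x)‖ = 2 * |sin (π * x)| := by
  have hexp : 2 * π * Complex.I * x = Complex.I * ((2 * (π * x) : ℝ) : ℂ) := by
    push_cast
    ring
  rw [hexp, norm_sub_rev, Complex.norm_exp_I_mul_ofReal_sub_one,
    mul_div_cancel_left₀ _ two_ne_zero, norm_mul, norm_two, norm_eq_abs]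

theorem prod_sin_pi_mul_div (n : ℕ) :
    ∏ k ∈ range n, sin (π * ((k + 1) / (n + 1))) = (n + 1) / 2 ^ n := by
  set ζ := Complex.exp (2 * π * Complex.I / (n + 1 : ℕ)) with hζ
  have hprim : IsPrimitiveRoot ζ (n + 1) := Complex.isPrimitiveRoot_exp (n + 1) n.succ_ne_zero
  have norm_one_sub_pow (k : ℕ) (hk : k ∈ range n) :
      ‖1 - ζ ^ (k + 1)‖ = 2 * sin (π * ((k + 1) / (n + 1))) := by
    have hle : ((k : ℝ) + 1) / (n + 1) ≤ 1 :=
      div_le_one_of_le₀ (by gcongr; exact (mem_range.mp hk).le) (by positivity)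
    have hsin : 0 ≤ sin (π * ((k + 1) / (n + 1))) :=
      sin_nonneg_of_nonneg_of_le_pi (by positivity) (mul_le_of_le_one_right pi_pos.le hle)
    rw [← abs_of_nonneg hsin, ← norm_one_sub_exp_two_pi_mul_I, hζ, ← Complex.exp_nat_mul]
    push_cast
    ring_nf
  rw [eq_div_iff (by positivity)]
  calc (∏ k ∈ range n, sin (π * ((k + 1) / (n + 1)))) * 2 ^ n
      = ∏ k ∈ range n, ‖1 - ζ ^ (k + 1)‖ := by
        rw [prod_congr rfl norm_one_sub_pow, prod_mul_distrib, prod_const, card_range, mul_comm]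
    _ = ‖((n + 1 : ℕ) : ℂ)‖ := by
        rw [← norm_prod, hprim.prod_one_sub_pow_eq_order, Nat.cast_succ]
    _ = n + 1 := by rw [Complex.norm_natCast, Nat.cast_succ]

theorem prod_Gamma_succ_div_sq (n : ℕ) :
    (∏ k ∈ range n, Gamma ((k + 1) / (n + 1))) ^ 2 = (2 * π) ^ n / (n + 1) := by
  have reflect : ∏ k ∈ range n, Gamma ((k + 1) / (n + 1)) =
      ∏ k ∈ range n, Gamma (1 - (k + 1) / (n + 1)) := by
    rw [← prod_range_reflect]
    refine prod_congr rfl fun k hk => congrArg Gamma ?_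
    rw [Nat.sub_sub, Nat.cast_sub (by grind)]
    push_cast
    field
  calc (∏ k ∈ range n, Gamma ((k + 1) / (n + 1))) ^ 2
      = ∏ k ∈ range n, Gamma ((k + 1) / (n + 1)) * Gamma (1 - (k + 1) / (n + 1)) := by
        rw [prod_mul_distrib, ← reflect, sq]
    _ = π ^ n / ∏ k ∈ range n, sin (π * ((k + 1) / (n + 1))) := by
        simp only [Gamma_mul_Gamma_one_sub, prod_div_distrib, prod_const, card_range]
    _ = (2 * π) ^ n / (n + 1) := by
        rw [prod_sin_pi_mul_div, mul_pow]
        field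

theorem prod_Gamma_succ_div (n : ℕ) :
    ∏ k ∈ range n, Gamma ((k + 1) / (n + 1)) = (2 * π) ^ ((n : ℝ) / 2) / √(n + 1) := by
  have hpos : 0 < ∏ k ∈ range n, Gamma (((k : ℝ) + 1) / (n + 1)) :=
    prod_pos fun k _ => Gamma_pos_of_pos (by positivity)
  rw [← sqrt_sq hpos.le, prod_Gamma_succ_div_sq, sqrt_div (by positivity), sqrt_eq_rpow,
    ← rpow_natCast, ← rpow_mul (by positivity), mul_one_div]

theorem convexOn_log_Gamma_mul_add {a b : ℝ} (ha : 0 < a) (hb : 0 ≤ b) :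
    ConvexOn ℝ (Set.Ioi 0) fun s => log (Gamma (a * s + b)) := by
  have lineMap_eq (s : ℝ) : AffineMap.lineMap b (a + b) s = a * s + b := by
    simp [AffineMap.lineMap_apply, mul_comm]
  refine ((convexOn_log_Gamma.comp_affineMap (AffineMap.lineMap b (a + b))).subset
    (fun s (hs : 0 < s) => ?_) (convex_Ioi 0)).congr fun s _ => ?_
  · rw [Set.mem_preimage, lineMap_eq, Set.mem_Ioi]
    positivity
  · simp only [Function.comp_apply, lineMap_eq]

section GaussGamma

variable {n : ℕ} {s : ℝ}

theorem prod_Gamma_add_natCast_div_pos (n : ℕ) (hs : 0 < s) :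
    0 < ∏ k ∈ range n, Gamma ((s + k) / n) := by
  refine prod_pos fun k hk => Gamma_pos_of_pos ?_
  have : 0 < n := pos_of_gt (mem_range.mp hk)
  positivity

theorem prod_Gamma_add_one_add_natCast_div (hn : n ≠ 0) (hs : s ≠ 0) :
    ∏ k ∈ range n, Gamma ((s + 1 + k) / n) = s / n * ∏ k ∈ range n, Gamma ((s + k) / n) := by
  obtain ⟨m, rfl⟩ := Nat.exists_eq_succ_of_ne_zero hn
  have hlast : (s + 1 + m) / (m.succ : ℝ) = s / m.succ + 1 := by
    push_cast
    field
  rw [prod_range_succ, prod_range_succ', hlast, Gamma_add_one (by positivity)]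
  push_cast
  simp only [add_zero, add_assoc, add_comm (1 : ℝ)]
  ring

/-- The function `s ↦ n ^ s * ∏_{k < n} Γ((s + k) / n)` of Gauss's multiplication formula, scaled to
take the value `1` at `1`. -/
noncomputable def gaussGamma (n : ℕ) (s : ℝ) : ℝ :=
  n ^ (s - 1) * (∏ k ∈ range n, Gamma ((s + k) / n)) / ∏ k ∈ range n, Gamma ((1 + k) / n)

theorem gaussGamma_pos (hn : n ≠ 0) (hs : 0 < s) : 0 < gaussGamma n s := by
  have := prod_Gamma_add_natCast_div_pos n hs
  have := prod_Gamma_add_natCast_div_pos n one_pos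
  unfold gaussGamma
  positivity

theorem gaussGamma_one (n : ℕ) : gaussGamma n 1 = 1 := by
  have := (prod_Gamma_add_natCast_div_pos n one_pos).ne'
  simp [gaussGamma, this]

theorem gaussGamma_add_one (hn : n ≠ 0) (hs : s ≠ 0) :
    gaussGamma n (s + 1) = s * gaussGamma n s := by
  have hn' : (n : ℝ) ≠ 0 := Nat.cast_ne_zero.mpr hn
  rw [gaussGamma, gaussGamma, prod_Gamma_add_one_add_natCast_div hn hs, add_sub_right_comm,
    rpow_add_one hn']
  field

theorem convexOn_log_gaussGamma (hn : n ≠ 0) : ConvexOn ℝ (Set.Ioi 0) (log ∘ gaussGamma n) := by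
  have hn' : 0 < (n : ℝ) := by positivity
  have hsum : ConvexOn ℝ (Set.Ioi 0) (∑ k ∈ range n, fun s : ℝ => log (Gamma ((s + k) / n))) := by
    refine sum_induction _ (ConvexOn ℝ _) (fun _ _ => .add) (convexOn_const 0 (convex_Ioi 0))
      fun k _ => ?_
    convert convexOn_log_Gamma_mul_add (inv_pos.mpr hn') (b := k / n) (by positivity) using 4
    field
  have hlin : ConvexOn ℝ (Set.Ioi (0 : ℝ)) fun s => log n * s :=
    (LinearMap.mulLeft ℝ (log n)).convexOn (convex_Ioi 0)
  refine ((hlin.add hsum).add_const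
    (-log n - log (∏ k ∈ range n, Gamma ((1 + k) / n)))).congr fun s (hs : 0 < s) => ?_
  have hΓ (k : ℕ) (_ : k ∈ range n) : Gamma ((s + k) / n) ≠ 0 :=
    (Gamma_pos_of_pos (by positivity)).ne'
  have := prod_Gamma_add_natCast_div_pos n hs
  have := prod_Gamma_add_natCast_div_pos n one_pos
  simp only [Function.comp_apply, Pi.add_apply, Finset.sum_apply, gaussGamma]
  rw [log_div (by positivity) (by positivity), log_mul (by positivity) (by positivity),
    log_rpow hn', log_prod hΓ]
  ring

theorem gaussGamma_eq_Gamma (hn : n ≠ 0) (hs : 0 < s) : gaussGamma n s = Gamma s :=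
  eq_Gamma_of_log_convex (convexOn_log_gaussGamma hn) (fun hy => gaussGamma_add_one hn hy.ne')
    (gaussGamma_pos hn) (gaussGamma_one n) hs

theorem prod_Gamma_add_div (hn : n ≠ 0) (hs : 0 < s) :
    ∏ k ∈ range n, Gamma (s + k / n) =
      (2 * π) ^ (((n : ℝ) - 1) / 2) * n ^ (1 / 2 - n * s) * Gamma (n * s) := by
  have hn' : 0 < (n : ℝ) := by positivity
  have hconst : ∏ k ∈ range n, Gamma ((1 + k) / n) = (2 * π) ^ (((n : ℝ) - 1) / 2) / √n := by
    obtain ⟨m, rfl⟩ := Nat.exists_eq_succ_of_ne_zero hn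
    have hlast : (1 + m) / (m.succ : ℝ) = 1 := by
      push_cast
      field
    rw [prod_range_succ, hlast, Gamma_one, mul_one, Nat.cast_succ, add_sub_cancel_right,
      ← prod_Gamma_succ_div]
    simp only [add_comm]
  have hshift (k : ℕ) : (n * s + k) / n = s + k / n := by field
  have hΓ := gaussGamma_eq_Gamma hn (mul_pos hn' hs)
  rw [gaussGamma, hconst] at hΓ
  simp only [hshift] at hΓ
  rw [← hΓ, rpow_sub hn', rpow_sub_one hn'.ne', ← sqrt_eq_rpow]
  field_simp
  rw [sq_sqrt hn'.le]

end GaussGamma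

theorem gamma_eleven_fifteenths :
    Real.Gamma (11/15) =
      2 * π * (3:ℝ) ^ ((3:ℝ)/10) *
        Real.Gamma (1/5) * (Real.Gamma (2/5))⁻¹ * (Real.Gamma (1/15))⁻¹ := by
  have gauss : Gamma (1/15) * Gamma (2/5) * Gamma (11/15) =
      2 * π * (3:ℝ) ^ ((3:ℝ)/10) * Gamma (1/5) :=
    calc Gamma (1/15) * Gamma (2/5) * Gamma (11/15)
        = ∏ k ∈ range 3, Gamma (1/15 + k / (3 : ℕ)) := by norm_num [prod_range_succ]
      _ = _ := prod_Gamma_add_div three_ne_zero (by norm_num)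
      _ = 2 * π * (3:ℝ) ^ ((3:ℝ)/10) * Gamma (1/5) := by norm_num
  have h₁ : Gamma (1/15) ≠ 0 := (Gamma_pos_of_pos (by norm_num)).ne'
  have h₂ : Gamma (2/5) ≠ 0 := (Gamma_pos_of_pos (by norm_num)).ne'
  rw [← gauss]
  field
end

section
/- The real Gamma function satisfies Γ(5/24) = (√π · √(√2 − 1) · √(√3 − 1) / (2^(1/6) · √3)) · Γ(1/3)⁻¹ · Γ(1/24). -/
open Real

/-!
By the Bohr-Mollerup theorem, Gauss's multiplication formula holds up to a constant depending only
on `n`, and this constant cancels when two instances are compared. For `n = 3`, comparing `1/8` with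
`5/8` and applying the reflection formula at `1/8` and `3/8` gives
`Γ(1/24) Γ(17/24) / (Γ(5/24) Γ(13/24)) = √3 cot (π/8)`. The duplication formula at `1/24` and `5/24`
eliminates `Γ(13/24)` and `Γ(17/24)`, which leaves `(Γ(1/24) / Γ(5/24))²` in terms of
`Γ(1/12) / Γ(5/12)`. Finally duplication and reflection together reduce `Γ(1/12) / Γ(5/12)` first
to `Γ(1/6)` and then to `Γ(1/3)²`.
-/

theorem eq_apply_one_mul_Gamma_of_log_convex {f : ℝ → ℝ}
    (hf_conv : ConvexOn ℝ (Set.Ioi 0) (log ∘ f))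
    (hf_feq : ∀ {y : ℝ}, 0 < y → f (y + 1) = y * f y)
    (hf_pos : ∀ {y : ℝ}, 0 < y → 0 < f y) {s : ℝ} (hs : 0 < s) :
    f s = f 1 * Gamma s := by
  have h1 : 0 < f 1 := hf_pos one_pos
  suffices f s / f 1 = Gamma s by rw [← this, mul_div_cancel₀ _ h1.ne']
  refine eq_Gamma_of_log_convex (f := fun y => f y / f 1) ?_ ?_ ?_ (div_self h1.ne') hs
  · refine (hf_conv.add_const (-log (f 1))).congr fun y hy => ?_
    simp only [Pi.add_apply, Function.comp_apply]
    rw [log_div (hf_pos hy).ne' h1.ne', sub_eq_add_neg]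
  · intro y hy
    rw [hf_feq hy, mul_div_assoc]
  · exact fun hy => div_pos (hf_pos hy) h1

theorem convexOn_log_Gamma_add_div {a c : ℝ} (ha : 0 ≤ a) (hc : 0 < c) :
    ConvexOn ℝ (Set.Ioi 0) fun s => log (Gamma ((s + a) / c)) := by
  refine ⟨convex_Ioi 0, fun x (hx : 0 < x) y (hy : 0 < y) p q hp hq hpq => ?_⟩
  have affine : (p • x + q • y + a) / c = p • ((x + a) / c) + q • ((y + a) / c) := by
    simp only [smul_eq_mul]
    field_simp
    linear_combination -a * hpq
  simp only [affine]
  exact convexOn_log_Gamma.2 (Set.mem_Ioi.2 (by positivity)) (Set.mem_Ioi.2 (by positivity))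
    hp hq hpq

/-- The left-hand side `n ^ s * Γ(s / n) * Γ((s + 1) / n) * ⋯ * Γ((s + n - 1) / n)` of Gauss's
multiplication formula, scaled so that it satisfies the functional equation of `Γ`. -/
noncomputable def gaussProduct (n : ℕ) (s : ℝ) : ℝ :=
  (n : ℝ) ^ s * ∏ k ∈ Finset.range n, Gamma ((s + k) / n)

namespace gaussProduct

variable {n : ℕ} {s : ℝ}

theorem pos (hn : n ≠ 0) (hs : 0 < s) : 0 < gaussProduct n s :=
  mul_pos (by positivity) (Finset.prod_pos fun _ _ => Gamma_pos_of_pos (by positivity))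

theorem add_one (hn : n ≠ 0) (hs : 0 < s) :
    gaussProduct n (s + 1) = s * gaussProduct n s := by
  have hn' : (n : ℝ) ≠ 0 := Nat.cast_ne_zero.2 hn
  have h0 : Gamma (s / n) ≠ 0 := by positivity
  have last : Gamma ((s + n) / n) = s / n * Gamma (s / n) := by
    rw [add_div, div_self hn', Gamma_add_one (by positivity)]
  have shift : (∏ k ∈ Finset.range n, Gamma ((s + 1 + k) / n)) * Gamma (s / n) =
      (∏ k ∈ Finset.range n, Gamma ((s + k) / n)) * Gamma ((s + n) / n) := by
    rw [← Finset.prod_range_succ, Finset.prod_range_succ']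
    simp only [Nat.cast_add, Nat.cast_one, Nat.cast_zero, add_zero, add_assoc, add_comm (1 : ℝ)]
  rw [last, ← mul_assoc] at shift
  rw [gaussProduct, gaussProduct, mul_right_cancel₀ h0 shift, rpow_add_one hn']
  field_simp

theorem convexOn_log (hn : n ≠ 0) : ConvexOn ℝ (Set.Ioi 0) (log ∘ gaussProduct n) := by
  have hn' : (0 : ℝ) < n := by positivity
  have linear : ConvexOn ℝ (Set.Ioi 0) fun s : ℝ => s * log n :=
    (LinearMap.mulRight ℝ (log n)).convexOn (convex_Ioi 0)
  have sum : ConvexOn ℝ (Set.Ioi 0) (∑ k ∈ Finset.range n, fun s => log (Gamma ((s + k) / n))) :=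
    Finset.sum_induction _ _ (fun _ _ => ConvexOn.add) (convexOn_const 0 (convex_Ioi 0))
      fun k _ => convexOn_log_Gamma_add_div k.cast_nonneg hn'
  refine (linear.add sum).congr fun s (hs : 0 < s) => ?_
  have hΓ : ∀ k ∈ Finset.range n, Gamma ((s + k) / n) ≠ 0 := fun k _ => by positivity
  simp only [Pi.add_apply, Finset.sum_apply, Function.comp_apply]
  rw [gaussProduct, log_mul (by positivity) (Finset.prod_ne_zero_iff.2 hΓ), log_rpow hn',
    log_prod hΓ]

theorem eq_apply_one_mul_Gamma (hn : n ≠ 0) (hs : 0 < s) :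
    gaussProduct n s = gaussProduct n 1 * Gamma s :=
  eq_apply_one_mul_Gamma_of_log_convex (convexOn_log hn) (add_one hn) (pos hn) hs

theorem mul_Gamma_comm {t : ℝ} (hn : n ≠ 0) (hs : 0 < s) (ht : 0 < t) :
    gaussProduct n s * Gamma t = gaussProduct n t * Gamma s := by
  rw [eq_apply_one_mul_Gamma hn hs, eq_apply_one_mul_Gamma hn ht, mul_right_comm]

end gaussProduct

theorem Gamma_add_half_mul_Gamma_half_sub (s : ℝ) :
    Gamma (s + 1 / 2) * Gamma (1 / 2 - s) = π / cos (π * s) := by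
  have h := Gamma_mul_Gamma_one_sub (s + 1 / 2)
  rwa [show 1 - (s + 1 / 2) = 1 / 2 - s by ring, show π * (s + 1 / 2) = π * s + π / 2 by ring,
    sin_add_pi_div_two] at h

theorem Gamma_mul_sqrt_pi {s : ℝ} (hs : cos (π * s) ≠ 0) :
    Gamma s * √π = 2 ^ (1 - 2 * s) * cos (π * s) * Gamma (2 * s) * Gamma (1 / 2 - s) := by
  have reflection : Gamma (s + 1 / 2) * Gamma (1 / 2 - s) * cos (π * s) = √π ^ 2 := by
    rw [Gamma_add_half_mul_Gamma_half_sub, div_mul_cancel₀ _ hs, sq_sqrt pi_pos.le]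
  have hΓ : Gamma (s + 1 / 2) ≠ 0 := by
    intro h
    rw [h, zero_mul, zero_mul] at reflection
    exact (pow_pos (sqrt_pos.2 pi_pos) 2).ne reflection
  refine mul_right_cancel₀ hΓ ?_
  linear_combination √π * Gamma_mul_Gamma_add_half s
    - 2 ^ (1 - 2 * s) * Gamma (2 * s) * reflection

theorem sin_pi_div_eight_pos : 0 < sin (π / 8) :=
  sin_pos_of_pos_of_lt_pi (by positivity) (by linarith [pi_pos])

theorem cos_pi_div_eight_eq_mul_sin : cos (π / 8) = (1 + √2) * sin (π / 8) := by
  have double : π / 4 = 2 * (π / 8) := by ring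
  have hsin_double := sin_pi_div_four
  have hcos_double := cos_pi_div_four
  rw [double, sin_two_mul] at hsin_double
  rw [double, cos_two_mul'] at hcos_double
  refine mul_left_cancel₀ sin_pi_div_eight_pos.ne' ?_
  linear_combination hsin_double / 2 + (1 + √2) / 2 * hcos_double
    - (1 + √2) / 2 * cos_sq_add_sin_sq (π / 8) + sq_sqrt (zero_le_two (α := ℝ)) / 4

theorem cos_pi_div_twelve : cos (π / 12) = √2 * (√3 + 1) / 4 := by
  rw [show π / 12 = π / 3 - π / 4 by ring, cos_sub, cos_pi_div_three, sin_pi_div_three,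
    cos_pi_div_four, sin_pi_div_four]
  ring

theorem Gamma_one_sixth_mul_sqrt_pi :
    Gamma (1 / 6) * √π = 2 ^ (2 / 3 : ℝ) * (√3 / 2) * Gamma (1 / 3) ^ 2 := by
  have hcos : cos (π * (1 / 6)) = √3 / 2 := by rw [mul_one_div, cos_pi_div_six]
  rw [Gamma_mul_sqrt_pi (by rw [hcos]; positivity), hcos, sq, ← mul_assoc]
  norm_num

theorem Gamma_one_twelfth_mul_sqrt_pi :
    Gamma (1 / 12) * √π =
      2 ^ (5 / 6 : ℝ) * (√2 * (√3 + 1) / 4) * Gamma (1 / 6) * Gamma (5 / 12) := by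
  have hcos : cos (π * (1 / 12)) = √2 * (√3 + 1) / 4 := by rw [mul_one_div, cos_pi_div_twelve]
  rw [Gamma_mul_sqrt_pi (by rw [hcos]; positivity), hcos]
  norm_num

theorem Gamma_one_twelfth_mul_two_pi :
    Gamma (1 / 12) * (2 * π) = √3 * (1 + √3) * Gamma (1 / 3) ^ 2 * Gamma (5 / 12) := by
  have powers : (2 : ℝ) ^ (5 / 6 : ℝ) * 2 ^ (2 / 3 : ℝ) * √2 = 4 := by
    rw [sqrt_eq_rpow, ← rpow_add two_pos, ← rpow_add two_pos]
    norm_num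
  calc Gamma (1 / 12) * (2 * π)
      = 2 * (Gamma (1 / 12) * √π) * √π := by
        rw [mul_assoc, mul_assoc, mul_self_sqrt pi_pos.le]; ring
    _ = 2 ^ (5 / 6 : ℝ) * (√2 * (√3 + 1) / 2) * (Gamma (1 / 6) * √π) * Gamma (5 / 12) := by
        rw [Gamma_one_twelfth_mul_sqrt_pi]; ring
    _ = 2 ^ (5 / 6 : ℝ) * 2 ^ (2 / 3 : ℝ) * √2 *
          (√3 * (1 + √3) / 4 * Gamma (1 / 3) ^ 2 * Gamma (5 / 12)) := by
        rw [Gamma_one_sixth_mul_sqrt_pi]; ring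
    _ = √3 * (1 + √3) * Gamma (1 / 3) ^ 2 * Gamma (5 / 12) := by
        rw [powers]; ring

theorem Gamma_one_twentyfourth_triplication :
    Gamma (1 / 24) * Gamma (17 / 24) * (Gamma (5 / 8) * Gamma (3 / 8)) =
      √3 * (Gamma (5 / 24) * Gamma (13 / 24)) * (Gamma (1 / 8) * Gamma (7 / 8)) := by
  have product_one_eighth : gaussProduct 3 (1 / 8) =
      3 ^ (1 / 8 : ℝ) * (Gamma (1 / 24) * Gamma (3 / 8) * Gamma (17 / 24)) := by
    norm_num [gaussProduct, Finset.prod_range_succ]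
  have product_five_eighths : gaussProduct 3 (5 / 8) =
      3 ^ (1 / 8 : ℝ) * √3 * (Gamma (5 / 24) * Gamma (13 / 24) * Gamma (7 / 8)) := by
    rw [sqrt_eq_rpow, ← rpow_add three_pos]
    norm_num [gaussProduct, Finset.prod_range_succ]
  have comm := gaussProduct.mul_Gamma_comm (n := 3) (s := 1 / 8) (t := 5 / 8)
    three_ne_zero (by norm_num) (by norm_num)
  rw [product_one_eighth, product_five_eighths] at comm
  have h3 : (3 : ℝ) ^ (1 / 8 : ℝ) ≠ 0 := (rpow_pos_of_pos three_pos _).ne'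
  refine mul_left_cancel₀ h3 ?_
  linear_combination comm

theorem Gamma_one_twentyfourth_mul_Gamma_seventeen_twentyfourths :
    Gamma (1 / 24) * Gamma (17 / 24) =
      √3 * (1 + √2) * (Gamma (5 / 24) * Gamma (13 / 24)) := by
  have reflection_three_eighths : Gamma (5 / 8) * Gamma (3 / 8) = π / cos (π / 8) := by
    rw [← mul_one_div π 8, ← Gamma_add_half_mul_Gamma_half_sub]
    norm_num
  have reflection_one_eighth : Gamma (1 / 8) * Gamma (7 / 8) = π / sin (π / 8) := by
    rw [← mul_one_div π 8, ← Gamma_mul_Gamma_one_sub]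
    norm_num
  have hsin := sin_pi_div_eight_pos
  have h := Gamma_one_twentyfourth_triplication
  rw [reflection_three_eighths, reflection_one_eighth, cos_pi_div_eight_eq_mul_sin] at h
  field_simp at h
  linear_combination h

theorem Gamma_one_twentyfourth_sq_mul_Gamma_five_twelfths :
    Gamma (1 / 24) ^ 2 * Gamma (5 / 12) =
      2 ^ (1 / 3 : ℝ) * √3 * (1 + √2) * Gamma (5 / 24) ^ 2 * Gamma (1 / 12) := by
  have duplication_one : Gamma (1 / 24) * Gamma (13 / 24) =
      Gamma (1 / 12) * (2 ^ (1 / 3 : ℝ) * 2 ^ (7 / 12 : ℝ)) * √π := by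
    rw [← rpow_add two_pos]
    convert Gamma_mul_Gamma_add_half (1 / 24) using 4 <;> norm_num
  have duplication_five : Gamma (5 / 24) * Gamma (17 / 24) =
      Gamma (5 / 12) * 2 ^ (7 / 12 : ℝ) * √π := by
    convert Gamma_mul_Gamma_add_half (5 / 24) using 4 <;> norm_num
  have hne : (2 : ℝ) ^ (7 / 12 : ℝ) * √π ≠ 0 := by positivity
  refine mul_right_cancel₀ hne ?_
  linear_combination Gamma (1 / 24) * Gamma (5 / 24)
      * Gamma_one_twentyfourth_mul_Gamma_seventeen_twentyfourths
    - Gamma (1 / 24) ^ 2 * duplication_five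
    + √3 * (1 + √2) * Gamma (5 / 24) ^ 2 * duplication_one

theorem Gamma_one_twentyfourth_sq_mul_two_pi :
    Gamma (1 / 24) ^ 2 * (2 * π) =
      3 * 2 ^ (1 / 3 : ℝ) * (1 + √2) * (1 + √3) * Gamma (1 / 3) ^ 2 * Gamma (5 / 24) ^ 2 := by
  have hΓ : Gamma (5 / 12) ≠ 0 := by positivity
  have h3 : √3 ^ 2 = 3 := sq_sqrt (by norm_num)
  refine mul_right_cancel₀ hΓ ?_
  linear_combination (2 * π) * Gamma_one_twentyfourth_sq_mul_Gamma_five_twelfths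
    + 2 ^ (1 / 3 : ℝ) * √3 * (1 + √2) * Gamma (5 / 24) ^ 2 * Gamma_one_twelfth_mul_two_pi
    + 2 ^ (1 / 3 : ℝ) * (1 + √2) * (1 + √3) * Gamma (5 / 24) ^ 2 * Gamma (1 / 3) ^ 2
      * Gamma (5 / 12) * h3

theorem Gamma_five_twentyfourths_sq :
    Gamma (5 / 24) ^ 2 =
      π * (√2 - 1) * (√3 - 1) / (2 ^ (1 / 3 : ℝ) * 3) * (Gamma (1 / 3) ^ 2)⁻¹
        * Gamma (1 / 24) ^ 2 := by
  have h2 : √2 ^ 2 = 2 := sq_sqrt (by norm_num)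
  have h3 : √3 ^ 2 = 3 := sq_sqrt (by norm_num)
  have hΓ : Gamma (1 / 3) ≠ 0 := by positivity
  field_simp
  linear_combination (-(√2 - 1) * (√3 - 1) / 2) * Gamma_one_twentyfourth_sq_mul_two_pi
    - 3 / 2 * 2 ^ (1 / 3 : ℝ) * Gamma (1 / 3) ^ 2 * Gamma (5 / 24) ^ 2
      * ((√3 ^ 2 - 1) * h2 + h3)

theorem gamma_five_twentyfourths :
    Real.Gamma (5/24) =
      (Real.sqrt π * Real.sqrt (Real.sqrt 2 - 1) * Real.sqrt (Real.sqrt 3 - 1) /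
          ((2:ℝ) ^ ((1:ℝ)/6) * Real.sqrt 3)) *
        (Real.Gamma (1/3))⁻¹ * Real.Gamma (1/24) := by
  have h2 : √(√2 - 1) ^ 2 = √2 - 1 := sq_sqrt (sub_nonneg.2 (one_le_sqrt.2 (by norm_num)))
  have h3 : √(√3 - 1) ^ 2 = √3 - 1 := sq_sqrt (sub_nonneg.2 (one_le_sqrt.2 (by norm_num)))
  have hpow : ((2 : ℝ) ^ (1 / 6 : ℝ)) ^ 2 = 2 ^ (1 / 3 : ℝ) := by
    rw [← rpow_mul_natCast zero_le_two]
    norm_num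
  rw [← pow_left_inj₀ (by positivity) (by positivity) two_ne_zero, Gamma_five_twentyfourths_sq]
  simp only [mul_pow, div_pow, inv_pow, h2, h3, hpow, sq_sqrt pi_pos.le,
    sq_sqrt (zero_le_three (α := ℝ))]
end
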